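/- (Main existence theorem on a bounded half-open interval.) Let b ∈ (0,∞), J_b = [0,b) and t₀ ∈ (0,b). Assume ⟨α_n,1⟩ ≠ 1 for every n ∈ ℕ. Let (n_p)_{p∈ℕ} be a strictly increasing sequence of natural numbers and (t_p)_{p∈ℕ} a sequence with t₀ < t₁ < t₂ < … and t_p → b. Suppose that for every p ∈ ℕ there exist a nonnegative A_p ∈ L¹(0,t₀) and constants B_p, C_p ≥ 0 such that for all x ∈ 𝒮: [f(t,x)]_{n_p} ≤ A_p(t)[x]_{n_p} + B_p for t ∈ [0,t₀], and [f(t,x)]_{n_p} ≤ C_p([x]_{n_p} + 1) for t ∈ [t₀,t_p]. If {[(𝕀 − ⟨α,𝕀⟩)^{-1}]_{n_p}·[‖α‖_*]_{n_p} + 1}·‖A_p‖_{L¹} < 1 for every p ∈ ℕ, then there exists x = (x_n) ∈ C(J_b,𝒮) such that each x_n is differentiable on J_b, x_n'(t) = f_n(t,x(t)) for all t ∈ J_b, and x_n(0) = ⟨α_n, x_n|_{[0,t₀]}⟩ for every n ∈ ℕ. -/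

import Mathlib

open Set MeasureTheory

noncomputable section

/-- Projection of `ℝ` onto the half line `J = [0, ∞)`. -/
def pj (s : ℝ) : Set.Ici (0:ℝ) := ⟨max 0 s, le_max_left 0 s⟩

/-- The seminorm `[x]ₙ = max_{1 ≤ i ≤ n} |xᵢ|` on `𝒮 = ℝ^ℕ` (components indexed from `0` to `n-1`). -/
def semS (n : ℕ) (x : ℕ → ℝ) : ℝ := ⨆ i : Fin n, |x (i : ℕ)|

section Brouwer
open Metric

lemma det_weights {V : Type*} [NormedAddCommGroup V] [InnerProductSpace ℝ V]
    [FiniteDimensional ℝ V] (δ : ℝ) (hδ : 0 < δ) :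
    ∃ (v w : Fin (Module.finrank ℝ V + 1) → ℝ), (∀ i, 0 < v i ∧ v i < δ) ∧ ∑ i, w i = 1 ∧
      ∀ A : V →L[ℝ] V, (1 + A).det = ∑ i, w i * (1 + v i • A).det := by
  classical
  set n := Module.finrank ℝ V
  let v : Fin (n+1) → ℝ := fun i => δ / ((i:ℕ) + 2)
  have hv : Function.Injective v := by
    intro i j h
    simp only [v] at h
    have hi : (0:ℝ) < (i:ℕ) + 2 := by positivity
    have hj : (0:ℝ) < (j:ℕ) + 2 := by positivity
    rw [div_eq_div_iff hi.ne' hj.ne'] at h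
    have := mul_left_cancel₀ hδ.ne' h
    have h2 : ((i:ℕ):ℝ) = (j:ℕ) := by linarith
    exact Fin.ext (by exact_mod_cast h2)
  refine ⟨v, fun i => (Lagrange.basis Finset.univ v i).eval 1, ?_, ?_, ?_⟩
  · intro i
    have hi : (0:ℝ) < (i:ℕ) + 2 := by positivity
    refine ⟨by positivity, ?_⟩
    simp only [v]
    rw [div_lt_iff₀ hi]
    have : (0:ℝ) ≤ (i:ℕ) := by positivity
    nlinarith
  · rw [← Polynomial.eval_finsetSum, Lagrange.sum_basis hv.injOn Finset.univ_nonempty]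
    simp
  · intro A
    let b := Module.finBasis ℝ V
    let M := LinearMap.toMatrix b b A.toLinearMap
    let p : Polynomial ℝ := Matrix.det ((Polynomial.X : Polynomial ℝ) • M.map Polynomial.C + (1 : Matrix (Fin n) (Fin n) ℝ).map Polynomial.C)
    have hdeg : p.degree < (Finset.univ : Finset (Fin (n+1))).card := by
      have h1 := Polynomial.natDegree_det_X_add_C_le M (1 : Matrix (Fin n) (Fin n) ℝ)
      refine lt_of_le_of_lt Polynomial.degree_le_natDegree ?_
      simp only [Finset.card_univ, Fintype.card_fin] at h1 ⊢
      exact_mod_cast Nat.lt_succ_of_le h1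
    have hev : ∀ t : ℝ, p.eval t = (1 + t • A).det := by
      intro t
      have e1 : p.eval t = Matrix.det (t • M + 1) := by
        simp only [p]
        rw [← Polynomial.coe_evalRingHom, RingHom.map_det]
        congr 1
        ext i j
        simp only [RingHom.mapMatrix_apply, Matrix.map_apply, Matrix.add_apply, Matrix.smul_apply, smul_eq_mul, map_add, Polynomial.eval_mul, Polynomial.coe_evalRingHom, Polynomial.eval_X, Polynomial.eval_C]
      rw [e1, ContinuousLinearMap.det, ← LinearMap.det_toMatrix b]
      congr 1
      have : ((1 + t • A : V →L[ℝ] V) : V →ₗ[ℝ] V) = t • A.toLinearMap + LinearMap.id := by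
        ext x; simp [add_comm]
      rw [this]
      simp [M]
    have h := Lagrange.eq_interpolate hv.injOn hdeg
    have h1 := congrArg (Polynomial.eval 1) h
    rw [hev, one_smul, Lagrange.interpolate_apply, Polynomial.eval_finsetSum] at h1
    rw [h1]
    refine Finset.sum_congr rfl fun i _ => ?_
    rw [Polynomial.eval_mul, Polynomial.eval_C, hev, mul_comm]

lemma no_retraction {V : Type*} [NormedAddCommGroup V] [InnerProductSpace ℝ V]
    [FiniteDimensional ℝ V] (r : V → V)
    (hr : ∀ x ∈ closedBall (0:V) 1, ContDiffAt ℝ 1 r x)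
    (h1 : ∀ x ∈ closedBall (0:V) 1, ‖r x‖ = 1) (h2 : ∀ x, ‖x‖ = 1 → r x = x) : False := by
  classical
  let _ : MeasurableSpace V := borel V
  have : BorelSpace V := ⟨rfl⟩
  let B := closedBall (0:V) 1
  let h : V → V := fun x => r x - x
  have hBc : IsCompact B := isCompact_closedBall _ _
  have hBconv : Convex ℝ B := convex_closedBall _ _
  have hd : ∀ x ∈ B, DifferentiableAt ℝ r x := fun x hx => (hr x hx).differentiableAt (by norm_num)
  let D : V → V →L[ℝ] V := fun x => fderiv ℝ r x - 1
  have hD : ∀ x ∈ B, HasFDerivAt h (D x) x := fun x hx =>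
    (hd x hx).hasFDerivAt.sub (hasFDerivAt_id x)
  have hDc : ContinuousOn D B := by
    intro x hx
    have := ((hr x hx).fderiv_right (m := 0) (by norm_num)).continuousAt
    exact (this.sub continuousAt_const).continuousWithinAt
  obtain ⟨C0, hC0⟩ := hBc.exists_bound_of_continuousOn hDc
  let C : ℝ := max C0 1
  have hC1 : 1 ≤ C := le_max_right _ _
  have hCD : ∀ x ∈ B, ‖D x‖ ≤ C := fun x hx => (hC0 x hx).trans (le_max_left _ _)
  have hlip : ∀ x ∈ B, ∀ y ∈ B, ‖h x - h y‖ ≤ C * ‖x - y‖ := fun x hx y hy =>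
    hBconv.norm_image_sub_le_of_norm_hasFDerivWithin_le
      (fun z hz => (hD z hz).hasFDerivWithinAt) hCD hy hx
  have hsph : ∀ x, ‖x‖ = 1 → h x = 0 := fun x hx => by simp [h, h2 x hx]
  let H : V → V := fun x => if x ∈ B then h x else 0
  have memB : ∀ x, x ∈ B ↔ ‖x‖ ≤ 1 := fun x => by simp [B]
  have hmix : ∀ x ∈ B, ∀ y ∉ B, ‖h x‖ ≤ C * ‖x - y‖ := by
    intro x hx y hy
    have hcont : ContinuousOn (fun s : ℝ => ‖x + s • (y - x)‖) (Icc 0 1) := by fun_prop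
    have := intermediate_value_Icc (zero_le_one) hcont
    have hx' := (memB x).1 hx
    have hy' : 1 < ‖y‖ := by
      by_contra hh; exact hy ((memB y).2 (not_lt.1 hh))
    obtain ⟨s, hs, hs1⟩ := this (show (1:ℝ) ∈ _ by simp; exact ⟨hx', hy'.le⟩)
    simp only at hs1
    have hz := hlip x hx (x + s • (y - x)) ((memB _).2 hs1.le)
    rw [hsph _ hs1, sub_zero] at hz
    refine hz.trans (mul_le_mul_of_nonneg_left ?_ (by linarith))
    have : x - (x + s • (y - x)) = s • (x - y) := by
      rw [smul_sub, smul_sub]; abel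
    rw [this, norm_smul, Real.norm_eq_abs, abs_of_nonneg hs.1]
    exact mul_le_of_le_one_left (norm_nonneg _) hs.2
  have Hlip : ∀ x y, ‖H x - H y‖ ≤ C * ‖x - y‖ := by
    intro x y
    simp only [H]
    split_ifs with hx hy hy
    · exact hlip x hx y hy
    · rw [sub_zero]; exact hmix x hx y hy
    · rw [zero_sub, norm_neg, norm_sub_rev x y]; exact hmix y ‹_› x hx
    · simp; positivity
  obtain ⟨v, w, hv, hw, hdet⟩ := det_weights (V := V) (1/(2*C)) (by positivity)
  have key : ∀ t : ℝ, 0 < t → t < 1/(2*C) →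
      ∫ x in B, (1 + t • D x).det = (volume B).toReal := by
    intro t ht0 ht
    have htC : t * C < 1/2 := by
      rw [lt_div_iff₀ (by positivity)] at ht; linarith
    have ht1 : t ≤ 1 := by nlinarith
    let φ : V → V := fun x => x + t • H x
    have hinj : Function.Injective φ := by
      intro x y hxy
      have e : x - y = t • (H y - H x) := by
        simp only [φ] at hxy
        rw [smul_sub, sub_eq_sub_iff_add_eq_add, hxy]; abel
      have e2 : ‖x - y‖ ≤ t * (C * ‖x - y‖) := by
        calc ‖x - y‖ = t * ‖H y - H x‖ := by
              conv_lhs => rw [e]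
              rw [norm_smul, Real.norm_eq_abs, abs_of_pos ht0]
          _ ≤ _ := by
              rw [norm_sub_rev x y]
              exact mul_le_mul_of_nonneg_left (Hlip y x) ht0.le
      have := norm_nonneg (x - y)
      have : ‖x - y‖ = 0 := by nlinarith
      exact sub_eq_zero.1 (norm_eq_zero.1 this)
    have hsurj : Function.Surjective φ := by
      intro y
      have hcw : ContractingWith (1/2 : NNReal) (fun x => y - t • H x) := by
        refine ⟨by rw [← NNReal.coe_lt_coe]; norm_num, LipschitzWith.of_dist_le_mul fun a b => ?_⟩
        rw [dist_eq_norm, dist_eq_norm, sub_sub_sub_cancel_left, ← smul_sub, norm_smul,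
          Real.norm_eq_abs, abs_of_pos ht0, norm_sub_rev a b]
        have := Hlip b a
        have h3 : t * ‖H b - H a‖ ≤ t * (C * ‖b - a‖) := mul_le_mul_of_nonneg_left this ht0.le
        have := norm_nonneg (b - a)
        push_cast
        nlinarith
      refine ⟨hcw.fixedPoint, ?_⟩
      have := hcw.fixedPoint_isFixedPt
      have e : y - t • H hcw.fixedPoint = hcw.fixedPoint := this
      simp only [φ]
      nth_rewrite 1 [← e]; simp
    let ψ : V → V := fun x => x + t • h x
    have hφψ : ∀ x ∈ B, φ x = ψ x := fun x hx => by simp [φ, ψ, H, hx]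
    have himg : ψ '' B = B := by
      ext y
      constructor
      · rintro ⟨x, hx, rfl⟩
        have : ψ x = (1 - t) • x + t • r x := by
          simp only [ψ, h, smul_sub, sub_smul, one_smul]; abel
        rw [this]
        exact hBconv hx ((memB _).2 (h1 x hx).le) (by linarith) ht0.le (by ring)
      · intro hy
        obtain ⟨x, hx⟩ := hsurj y
        by_cases hxB : x ∈ B
        · exact ⟨x, hxB, by rw [← hφψ x hxB, hx]⟩
        · exfalso
          have : φ x = x := by simp [φ, H, hxB]
          rw [this] at hx
          exact hxB (hx ▸ hy)
    have hder : ∀ x ∈ B, HasFDerivWithinAt ψ (1 + t • D x) B x := fun x hx =>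
      ((hasFDerivAt_id x).add ((hD x hx).const_smul t)).hasFDerivWithinAt
    have hψinj : InjOn ψ B := by
      intro x hx y hy hxy
      rw [← hφψ x hx, ← hφψ y hy] at hxy
      exact hinj hxy
    have hch := integral_image_eq_integral_abs_det_fderiv_smul (volume : Measure V)
      (isClosed_closedBall.measurableSet : MeasurableSet B) hder hψinj (fun _ => (1:ℝ))
    rw [himg] at hch
    have hpos : ∀ x ∈ B, 0 < (1 + t • D x).det := by
      intro x hx
      have hne : ∀ s ∈ Icc (0:ℝ) 1, (1 + (s * t) • D x).det ≠ 0 := by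
        intro s hs h0
        have hinj' : LinearMap.ker ((1 + (s * t) • D x : V →L[ℝ] V) : V →ₗ[ℝ] V) = ⊥ := by
          rw [LinearMap.ker_eq_bot']
          intro u hu
          have hu' : u + (s * t) • D x u = 0 := by simpa using hu
          have e : ‖u‖ = (s * t) * ‖D x u‖ := by
            have e0 := congrArg norm (eq_neg_of_add_eq_zero_left hu')
            rwa [norm_neg, norm_smul, Real.norm_eq_abs,
              abs_of_nonneg (mul_nonneg hs.1 ht0.le)] at e0
          have e3 : ‖D x u‖ ≤ C * ‖u‖ :=
            ((D x).le_opNorm u).trans (mul_le_mul_of_nonneg_right (hCD x hx) (norm_nonneg _))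
          have e4 : (s * t) * ‖D x u‖ ≤ t * ‖D x u‖ := 
            mul_le_mul_of_nonneg_right (mul_le_of_le_one_left ht0.le hs.2) (norm_nonneg _)
          have e5 : t * ‖D x u‖ ≤ t * (C * ‖u‖) := mul_le_mul_of_nonneg_left e3 ht0.le
          have := norm_nonneg u
          have : ‖u‖ = 0 := by nlinarith
          exact norm_eq_zero.1 this
        have hu := LinearMap.isUnit_iff_ker_eq_bot _ |>.2 hinj'
        have := LinearMap.isUnit_det _ hu
        exact this.ne_zero h0
      have hcont : ContinuousOn (fun s : ℝ => (1 + (s * t) • D x).det) (Icc 0 1) :=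
        (ContinuousLinearMap.continuous_det.comp (by fun_prop)).continuousOn
      by_contra hneg
      have hneg := not_lt.1 hneg
      have := intermediate_value_Icc' (zero_le_one) hcont
      obtain ⟨s, hs, hs0⟩ := this (show (0:ℝ) ∈ _ by
        simp only [one_mul, zero_mul, zero_smul, add_zero]
        refine ⟨hneg, ?_⟩
        simp [ContinuousLinearMap.det])
      exact hne s hs hs0
    have e6 : ∫ x in B, |(1 + t • D x).det| • (1:ℝ) = ∫ x in B, (1 + t • D x).det := by
      refine setIntegral_congr_fun isClosed_closedBall.measurableSet fun x hx => ?_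
      simp [abs_of_pos (hpos x hx)]
    rw [← e6, ← hch]
    simp [Measure.real]
  have hIntg : ∀ t : ℝ, IntegrableOn (fun x => (1 + t • D x).det) B := by
    intro t
    refine ContinuousOn.integrableOn_compact hBc ?_
    exact ContinuousLinearMap.continuous_det.comp_continuousOn
      (continuousOn_const.add (hDc.const_smul t))
  have htot : ∫ x in B, (1 + D x).det = (volume B).toReal := by
    rw [show (fun x => (1 + D x).det) = fun x => ∑ i, w i * (1 + v i • D x).det from
      funext fun x => hdet (D x)]
    rw [integral_finsetSum _ (fun i _ => (hIntg (v i)).const_mul (w i))]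
    simp_rw [integral_const_mul]
    rw [Finset.sum_congr rfl (fun i _ => by rw [key (v i) (hv i).1 (hv i).2]), ← Finset.sum_mul, hw,
      one_mul]
  have hzero : ∀ x ∈ ball (0:V) 1, (1 + D x).det = 0 := by
    intro x hx
    have hxB : x ∈ B := ball_subset_closedBall hx
    have e : (1 + D x) = fderiv ℝ r x := by simp [D]
    rw [e]
    by_contra hne
    have hcst : (fun y => inner ℝ (r y) (r y)) =ᶠ[nhds x] fun _ => (1:ℝ) := by
      filter_upwards [isOpen_ball.mem_nhds hx] with y hy
      rw [real_inner_self_eq_norm_sq, h1 y (ball_subset_closedBall hy)]; norm_num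
    have hder := ((hd x hxB).hasFDerivAt.inner ℝ (hd x hxB).hasFDerivAt)
    have hder2 := (hasFDerivAt_const (𝕜 := ℝ) (1:ℝ) x).congr_of_eventuallyEq hcst
    have heq := hder.unique hder2
    have hunit : IsUnit (LinearMap.det ((fderiv ℝ r x : V →L[ℝ] V) : V →ₗ[ℝ] V)) :=
      isUnit_iff_ne_zero.2 hne
    have hu2 := (LinearMap.isUnit_iff_isUnit_det _).2 hunit
    have hsurj := LinearMap.range_eq_top.1 ((LinearMap.isUnit_iff_range_eq_top _).1 hu2)
    obtain ⟨u, hu⟩ := hsurj (r x)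
    have hu' : fderiv ℝ r x u = r x := hu
    have := congrArg (fun L => L u) heq
    simp [hu', h1 x hxB] at this
  have hz : ∫ x in B, (1 + D x).det = 0 := by
    have e : ∫ x in B, (1 + D x).det = ∫ x in ball (0:V) 1, (1 + D x).det := by
      refine setIntegral_congr_set ?_
      refine (ae_eq_of_subset_of_measure_ge ball_subset_closedBall ?_
        isOpen_ball.measurableSet.nullMeasurableSet hBc.measure_lt_top.ne).symm
      rw [← ball_union_sphere]
      refine (measure_union_le _ _).trans ?_
      rw [Measure.addHaar_sphere_of_ne_zero _ _ one_ne_zero, add_zero]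
    rw [e]
    rw [setIntegral_congr_fun isOpen_ball.measurableSet (g := fun _ => (0:ℝ)) hzero]
    simp
  rw [htot] at hz
  have hp : 0 < volume B := measure_closedBall_pos _ _ one_pos
  have hf : volume B ≠ ⊤ := hBc.measure_lt_top.ne
  exact (ENNReal.toReal_pos hp.ne' hf).ne' hz

lemma brouwer_smooth {V : Type*} [NormedAddCommGroup V] [InnerProductSpace ℝ V]
    [FiniteDimensional ℝ V] (g : V → V) (hg : ContDiff ℝ 1 g) (hb : ∀ x, ‖g x‖ ≤ 1) :
    ∃ x ∈ closedBall (0:V) 1, g x = x := by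
  by_contra hcon
  push Not at hcon
  let u : V → V := fun x => x - g x
  let P : V → ℝ := fun x => inner ℝ x (u x)
  let Q : V → ℝ := fun x => P x ^ 2 + ‖u x‖ ^ 2 * (1 - ‖x‖ ^ 2)
  let l : V → ℝ := fun x => (-P x + Real.sqrt (Q x)) / ‖u x‖ ^ 2
  let r : V → V := fun x => x + l x • u x
  have hu : ContDiff ℝ 1 u := contDiff_id.sub hg
  have hP : ContDiff ℝ 1 P := contDiff_id.inner ℝ hu
  have hQ : ContDiff ℝ 1 Q := (hP.pow 2).add ((hu.norm_sq ℝ).mul (contDiff_const.sub (contDiff_norm_sq ℝ)))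
  have hu0 : ∀ x ∈ closedBall (0:V) 1, 0 < ‖u x‖ ^ 2 := by
    intro x hx
    have : u x ≠ 0 := fun h => hcon x hx (sub_eq_zero.1 h).symm
    have := norm_pos_iff.2 this
    positivity
  have hPs : ∀ x, ‖x‖ = 1 → u x ≠ 0 → 0 < P x := by
    intro x hx hux
    have e : ‖g x‖ ^ 2 = ‖x‖ ^ 2 - 2 * P x + ‖u x‖ ^ 2 := by
      rw [← norm_sub_sq_real]; simp [u]
    have h1 : ‖g x‖ ^ 2 ≤ 1 := by
      have := hb x
      have := norm_nonneg (g x)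
      nlinarith
    have h2 := norm_pos_iff.2 hux
    rw [hx] at e
    nlinarith
  have hQ0 : ∀ x ∈ closedBall (0:V) 1, 0 < Q x := by
    intro x hx
    have hx' : ‖x‖ ≤ 1 := by simpa using hx
    have h0 := hu0 x hx
    rcases hx'.lt_or_eq with h | h
    · have : 0 < 1 - ‖x‖ ^ 2 := by have := norm_nonneg x; nlinarith
      simp only [Q]; positivity
    · have : u x ≠ 0 := by
        intro h'; rw [h'] at h0; simp at h0
      have := hPs x h this
      simp only [Q, h]; nlinarith
  refine no_retraction r ?_ ?_ ?_
  · intro x hx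
    have hl : ContDiffAt ℝ 1 l x :=
      (hP.contDiffAt.neg.add (hQ.contDiffAt.sqrt (hQ0 x hx).ne')).div
        (hu.norm_sq ℝ).contDiffAt (hu0 x hx).ne'
    exact contDiffAt_id.add (hl.smul hu.contDiffAt)
  · intro x hx
    have h0 := hu0 x hx
    have e : ‖r x‖ ^ 2 = 1 := by
      simp only [r]
      rw [norm_add_sq_real, inner_smul_right, norm_smul, mul_pow, Real.norm_eq_abs, sq_abs]
      change ‖x‖ ^ 2 + 2 * (l x * P x) + l x ^ 2 * ‖u x‖ ^ 2 = 1
      have hs := Real.sq_sqrt (hQ0 x hx).le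
      have hl : l x * ‖u x‖ ^ 2 = -P x + Real.sqrt (Q x) := div_mul_cancel₀ _ h0.ne'
      have hsq : (l x * ‖u x‖ ^ 2 + P x) ^ 2 = Q x := by rw [hl]; ring_nf; ring_nf at hs; exact hs
      have : (‖x‖ ^ 2 + 2 * (l x * P x) + l x ^ 2 * ‖u x‖ ^ 2 - 1) * ‖u x‖ ^ 2 = 0 := by
        simp only [Q] at hsq
        linear_combination hsq
      rcases mul_eq_zero.1 this with h | h
      · linarith
      · exact absurd h h0.ne'
    have := norm_nonneg (r x)
    nlinarith
  · intro x hx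
    have hxB : x ∈ closedBall (0:V) 1 := by simp [hx]
    have h0 := hu0 x hxB
    have hux : u x ≠ 0 := by
      intro h'; rw [h'] at h0; simp at h0
    have hp := hPs x hx hux
    have : l x = 0 := by
      simp [l, Q, hx, Real.sqrt_sq hp.le]
    simp [r, this]

open scoped Manifold ContDiff in
lemma brouwer_unit {V : Type*} [NormedAddCommGroup V] [InnerProductSpace ℝ V]
    [FiniteDimensional ℝ V] (g : V → V) (hg : Continuous g) (hb : ∀ x, ‖g x‖ ≤ 1) :
    ∃ x, g x = x := by
  by_contra hcon
  push Not at hcon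
  obtain ⟨x0, hx0, hmin⟩ := (isCompact_closedBall (0:V) 1).exists_isMinOn
    ⟨0, by simp⟩ ((hg.sub continuous_id).norm.continuousOn)
  set δ := ‖g x0 - x0‖ with hδ
  have hδ0 : 0 < δ := norm_pos_iff.2 (sub_ne_zero.2 (hcon x0))
  let ε := δ / 4
  have hε : 0 < ε := by positivity
  obtain ⟨k, hk⟩ := exists_contMDiffMap_forall_mem_convex_of_local_const (n := 1) 𝓘(ℝ, V)
    (t := fun x => ball (g x) ε) (fun x => convex_ball _ _) (fun x => ⟨g x, by
      have := hg.tendsto x (ball_mem_nhds (g x) hε)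
      filter_upwards [this] with y hy
      rw [mem_ball_comm]; exact hy⟩)
  have hkc : ContDiff ℝ 1 (k : V → V) := k.contMDiff.contDiff
  have hk1 : ∀ x, ‖k x - g x‖ < ε := fun x => by simpa [dist_eq_norm] using hk x
  have hk2 : ∀ x, ‖k x‖ ≤ 1 + ε := fun x => by
    have h1 := norm_add_le (k x - g x) (g x)
    rw [sub_add_cancel] at h1
    linarith [hk1 x, hb x]
  obtain ⟨x, hx, hfx⟩ := brouwer_smooth (fun x => (1 + ε)⁻¹ • k x) (contDiff_const.smul hkc) (fun x => by
    rw [norm_smul, Real.norm_eq_abs, abs_of_pos (by positivity), inv_mul_le_iff₀ (by positivity)]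
    linarith [hk2 x])
  have hkx : k x = (1 + ε) • x := by
    have e : (1 + ε)⁻¹ • k x = x := hfx
    have h4 : (1 + ε) ≠ 0 := by positivity
    rw [← smul_inv_smul₀ h4 (k x), e]
  have hx1 : ‖x‖ ≤ 1 := by simpa using hx
  have : ‖g x - x‖ ≤ 2 * ε := by
    have e : g x - x = -(k x - g x) + ε • x := by
      rw [hkx, add_smul, one_smul]; abel
    rw [e]
    refine (norm_add_le _ _).trans ?_
    rw [norm_neg, norm_smul, Real.norm_eq_abs, abs_of_pos hε]
    have := hk1 x
    nlinarith
  have h3 : δ ≤ ‖g x - x‖ := hmin hx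
  simp only [ε] at this
  linarith

lemma brouwer_bdd {V : Type*} [NormedAddCommGroup V] [InnerProductSpace ℝ V]
    [FiniteDimensional ℝ V] (g : V → V) (hg : Continuous g) (R : ℝ) (hR : 0 < R)
    (hb : ∀ x, ‖g x‖ ≤ R) : ∃ x, g x = x := by
  obtain ⟨x, hx⟩ := brouwer_unit (fun x => R⁻¹ • g (R • x)) (by fun_prop) (fun x => by
    rw [norm_smul, Real.norm_eq_abs, abs_of_pos (by positivity), inv_mul_le_iff₀ hR]
    linarith [hb (R • x)])
  refine ⟨R • x, ?_⟩
  nth_rewrite 2 [← hx]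
  rw [smul_inv_smul₀ hR.ne']

/-- Brouwer on the simplex. -/
lemma brouwer_simplex {ι : Type*} [Fintype ι] [Nonempty ι] (g : (ι → ℝ) → (ι → ℝ))
    (hg : ContinuousOn g (stdSimplex ℝ ι)) (hm : ∀ w ∈ stdSimplex ℝ ι, g w ∈ stdSimplex ℝ ι) :
    ∃ w ∈ stdSimplex ℝ ι, g w = w := by
  let N : ℝ := Fintype.card ι
  have hN : 0 < N := by simp only [N]; exact_mod_cast Fintype.card_pos
  let S : (ι → ℝ) → ℝ := fun w => ∑ i, max (w i) 0
  have hS : Continuous S := by fun_prop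
  have hS0 : ∀ w, 0 ≤ S w := fun w => Finset.sum_nonneg fun i _ => le_max_right _ _
  let ρ : (ι → ℝ) → (ι → ℝ) := fun w i => (max (w i) 0 + max (1 - S w) 0 / N) / max 1 (S w)
  have hden : ∀ w, 0 < max 1 (S w) := fun w => lt_of_lt_of_le one_pos (le_max_left _ _)
  have hρ : Continuous ρ := by
    refine continuous_pi fun i => ?_
    refine Continuous.div ?_ (by fun_prop) (fun w => (hden w).ne')
    fun_prop
  have hρm : ∀ w, ρ w ∈ stdSimplex ℝ ι := by
    intro w
    refine ⟨fun i => ?_, ?_⟩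
    · have := hden w
      simp only [ρ]
      have h1 : 0 ≤ max (w i) 0 := le_max_right _ _
      have h2 : 0 ≤ max (1 - S w) 0 := le_max_right _ _
      positivity
    · simp only [ρ]
      rw [← Finset.sum_div, Finset.sum_add_distrib, Finset.sum_const, Finset.card_univ, nsmul_eq_mul,
        mul_div_cancel₀ _ hN.ne', div_eq_one_iff_eq (hden w).ne']
      change S w + _ = _
      rcases le_total 1 (S w) with h | h
      · rw [max_eq_right h, max_eq_right (by linarith)]; ring
      · rw [max_eq_left h, max_eq_left (by linarith)]; ring
  have hρid : ∀ w ∈ stdSimplex ℝ ι, ρ w = w := by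
    intro w hw
    have h1 : ∀ i, max (w i) 0 = w i := fun i => max_eq_left (hw.1 i)
    have h2 : S w = 1 := by simp only [S, h1]; exact hw.2
    funext i
    simp [ρ, h1, h2]
  let V := EuclideanSpace ℝ ι
  let G : V → V := fun v => WithLp.toLp 2 (g (ρ v.ofLp))
  have hG : Continuous G := by
    refine (PiLp.continuous_toLp 2 _).comp ?_
    refine hg.comp_continuous (hρ.comp (PiLp.continuous_ofLp 2 _)) (fun v => hρm _)
  have hcomp : IsCompact (WithLp.toLp 2 '' (stdSimplex ℝ ι) : Set V) :=
    (isCompact_stdSimplex ℝ ι).image (PiLp.continuous_toLp 2 _)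
  obtain ⟨R, hR⟩ := hcomp.isBounded.exists_norm_le
  obtain ⟨v, hv⟩ := brouwer_bdd G hG (max R 1) (lt_of_lt_of_le one_pos (le_max_right _ _))
    (fun v => (hR _ ⟨_, hm _ (hρm _), rfl⟩).trans (le_max_left _ _))
  have hv' : g (ρ v.ofLp) = v.ofLp := congrArg WithLp.ofLp hv
  have hvm : v.ofLp ∈ stdSimplex ℝ ι := by rw [← hv']; exact hm _ (hρm _)
  refine ⟨v.ofLp, hvm, ?_⟩
  rwa [hρid _ hvm] at hv'

/-- Schauder and Tychonoff. -/
lemma tychonoff_fixed {E : Type*} [AddCommGroup E] [Module ℝ E] [TopologicalSpace E]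
    [IsTopologicalAddGroup E] [ContinuousSMul ℝ E] [LocallyConvexSpace ℝ E] [T2Space E]
    (K : Set E) (hK : IsCompact K) (hconv : Convex ℝ K) (hne : K.Nonempty)
    (T : K → E) (hT : Continuous T) (hm : ∀ x, T x ∈ K) : ∃ x : K, T x = x := by
  classical
  have : CompactSpace K := isCompact_iff_compactSpace.1 hK
  have hcl : IsClosed (range fun x : K => T x - (x:E)) :=
    (isCompact_range (hT.sub continuous_subtype_val)).isClosed
  suffices h0 : (0:E) ∈ closure (range fun x : K => T x - (x:E)) by
    rw [hcl.closure_eq] at h0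
    obtain ⟨x, hx⟩ := h0
    exact ⟨x, sub_eq_zero.1 hx⟩
  rw [mem_closure_iff_nhds]
  intro U hU
  have hU' : -U ∈ nhds (0:E) := by
    simpa using neg_mem_nhds_zero E hU
  obtain ⟨W, ⟨hW, hWc⟩, hWU⟩ := (LocallyConvexSpace.convex_basis_zero ℝ E).mem_iff.1 hU'
  simp only [id] at hWU
  -- open neighbourhoods
  let O : K → Set K := fun y => {x : K | (y:E) - x ∈ interior W}
  have hO : ∀ y, IsOpen (O y) := fun y =>
    isOpen_interior.preimage (continuous_const.sub continuous_subtype_val)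
  obtain ⟨s, hs⟩ := isCompact_univ.elim_finite_subcover O hO (fun x _ => mem_iUnion.2 ⟨x, by
    simp only [O, mem_ofPred_eq, sub_self]; exact mem_interior_iff_mem_nhds.2 hW⟩)
  have hsne : Nonempty s := by
    obtain ⟨z, hz⟩ := hne
    obtain ⟨y, hy, _⟩ := mem_iUnion₂.1 (hs (mem_univ (⟨z, hz⟩ : K)))
    exact ⟨⟨y, hy⟩⟩
  obtain ⟨φ, hφ⟩ := PartitionOfUnity.exists_isSubordinate (isClosed_univ (X := K))
    (fun i : s => O i) (fun i => hO i) (fun x hx => by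
      obtain ⟨y, hy, h⟩ := mem_iUnion₂.1 (hs hx)
      exact mem_iUnion.2 ⟨⟨y, hy⟩, h⟩)
  have hsum : ∀ x, ∑ i, φ i x = 1 := fun x => by
    rw [← finsum_eq_sum_of_fintype]; exact φ.sum_eq_one (mem_univ x)
  let c : (s → ℝ) → E := fun w => ∑ i, w i • ((i : K) : E)
  have hc : Continuous c := by fun_prop
  have hcK : ∀ w ∈ stdSimplex ℝ s, c w ∈ K := fun w hw =>
    hconv.sum_mem (fun i _ => hw.1 i) hw.2 (fun i _ => (i : K).2)
  let Tk : K → K := fun x => ⟨T x, hm x⟩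
  have hTk : Continuous Tk := hT.subtype_mk _
  let g : (s → ℝ) → (s → ℝ) := fun w =>
    if h : c w ∈ K then fun i => φ i (Tk ⟨c w, h⟩) else 0
  obtain ⟨w, hw, hgw⟩ := brouwer_simplex g (by
      rw [continuousOn_iff_continuous_domRestrict]
      have : (stdSimplex ℝ s).domRestrict g = fun w : stdSimplex ℝ s => fun i => φ i (Tk ⟨c w.1, hcK w.1 w.2⟩) := by
        funext w
        simp only [g, Set.domRestrict_apply, hcK w.1 w.2, dif_pos]
      rw [this]
      refine continuous_pi fun i => (φ i).continuous.comp (hTk.comp ?_)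
      exact (hc.comp continuous_subtype_val).subtype_mk _)
    (fun w hw => by
      simp only [g, hcK w hw, dif_pos]
      exact ⟨fun i => φ.nonneg i _, hsum _⟩)
  let x : K := ⟨c w, hcK w hw⟩
  have hwi : ∀ i, w i = φ i (Tk x) := by
    intro i
    have := congrFun hgw i
    simp only [g, hcK w hw, dif_pos] at this
    exact this.symm
  refine ⟨T x - x, ?_, ⟨x, rfl⟩⟩
  have hmem : ∑ i, w i • (((i:K):E) - T x) ∈ W := by
    rw [← Finset.sum_filter_of_ne (p := fun i => w i ≠ 0) (fun i _ h h0 => h (by rw [h0, zero_smul]))]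
    refine hWc.sum_mem (fun i _ => hw.1 i) ?_ ?_
    · rw [Finset.sum_filter_ne_zero]; exact hw.2
    · intro i hi
      have hi' : φ i (Tk x) ≠ 0 := by rw [← hwi]; exact (Finset.mem_filter.1 hi).2
      have : Tk x ∈ O i := hφ i (subset_tsupport _ hi')
      exact interior_subset this
  have e : ∑ i, w i • (((i:K):E) - T x) = (x:E) - T x := by
    simp only [smul_sub, Finset.sum_sub_distrib, ← Finset.sum_smul]
    rw [hw.2, one_smul]
  rw [e] at hmem
  have := hWU hmem
  simpa using this

lemma isClosed_all {X : Type*} {ι : Sort*} [TopologicalSpace X] {p : ι → X → Prop}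
    (h : ∀ i, IsClosed {x | p i x}) : IsClosed {x | ∀ i, p i x} := by
  have := isClosed_iInter h
  convert this
  ext x
  simp

noncomputable def clampS (T s : ℝ) : ℝ := max 0 (min T s)

lemma clampS_mem {T : ℝ} (hT : 0 ≤ T) (s : ℝ) : clampS T s ∈ Icc 0 T :=
  ⟨le_max_left _ _, max_le hT (min_le_left _ _)⟩

lemma clampS_eq {T s : ℝ} (hs : s ∈ Icc 0 T) : clampS T s = s := by
  simp [clampS, hs.1, hs.2]

lemma continuous_clampS (T : ℝ) : Continuous (clampS T) := by unfold clampS; fun_prop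

lemma prim_cont (t₀ : ℝ) (g : ℝ → ℝ) (h : ContinuousOn g (Icc 0 t₀)) :
    Continuous (fun t : Icc (0:ℝ) t₀ => ∫ s in (0:ℝ)..t, g s) := by
  rcases le_or_gt 0 t₀ with ht | ht
  · have hu : uIcc 0 t₀ = Icc 0 t₀ := uIcc_of_le ht
    have := intervalIntegral.continuousOn_primitive_interval (f := g) (a := 0) (b := t₀)
      (μ := volume) (by rw [hu]; exact h.integrableOn_Icc)
    rw [hu] at this
    exact continuousOn_iff_continuous_domRestrict.1 this
  · have : IsEmpty (Icc (0:ℝ) t₀) := by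
      rw [Icc_eq_empty (not_le.2 ht)]; infer_instance
    exact continuous_of_const fun x => isEmptyElim x

open Classical in
noncomputable def primC (t₀ : ℝ) (g : ℝ → ℝ) : C(Icc (0:ℝ) t₀, ℝ) :=
  if h : ContinuousOn g (Icc 0 t₀) then ⟨fun t => ∫ s in (0:ℝ)..t, g s, prim_cont t₀ g h⟩ else 0

lemma primC_apply {t₀ : ℝ} {g : ℝ → ℝ} (h : ContinuousOn g (Icc 0 t₀)) (t : Icc (0:ℝ) t₀) :
    primC t₀ g t = ∫ s in (0:ℝ)..t, g s := by
  rw [primC, dif_pos h]; rfl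

def gS (f : ℕ → ℝ → (ℕ → ℝ) → ℝ) (x : ℕ → ℝ → ℝ) (n : ℕ) (s : ℝ) : ℝ := f n s (fun m => x m s)

open Classical in
noncomputable def topS (b t₀ : ℝ) (f : ℕ → ℝ → (ℕ → ℝ) → ℝ) (α : ℕ → C(Set.Icc (0:ℝ) t₀, ℝ) →L[ℝ] ℝ)
    (x : ℕ → ℝ → ℝ) (n : ℕ) (t : ℝ) : ℝ :=
  if t ∈ Ico 0 b then (1 - α n 1)⁻¹ * α n (primC t₀ (gS f x n)) + ∫ s in (0:ℝ)..t, gS f x n s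
  else 0

lemma gS_cont {b : ℝ} {f : ℕ → ℝ → (ℕ → ℝ) → ℝ}
    (hf : ∀ n, ContinuousOn (fun q : ℝ × (ℕ → ℝ) => f n q.1 q.2)
      (Set.Ico (0:ℝ) b ×ˢ (Set.univ : Set (ℕ → ℝ))))
    {x : ℕ → ℝ → ℝ} (hx : ∀ n, ContinuousOn (x n) (Ico 0 b)) (n : ℕ) :
    ContinuousOn (gS f x n) (Ico 0 b) := by
  have : ContinuousOn (fun s : ℝ => (s, fun m => x m s)) (Ico 0 b) :=
    continuousOn_id.prodMk (continuousOn_pi.2 hx)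
  exact (hf n).comp this (fun s hs => ⟨hs, mem_univ _⟩)

lemma exists_solution
    (b : ℝ) (t₀ : ℝ) (ht₀ : 0 < t₀) (ht₀b : t₀ < b)
    (f : ℕ → ℝ → (ℕ → ℝ) → ℝ)
    (hf : ∀ n, ContinuousOn (fun q : ℝ × (ℕ → ℝ) => f n q.1 q.2)
      (Set.Ico (0:ℝ) b ×ˢ (Set.univ : Set (ℕ → ℝ))))
    (α : ℕ → C(Set.Icc (0:ℝ) t₀, ℝ) →L[ℝ] ℝ)
    (hα : ∀ n, α n 1 ≠ 1)
    (Y : ℕ → ℝ → Set ℝ) (hYcl : ∀ n t, IsClosed (Y n t)) (hYco : ∀ n t, Convex ℝ (Y n t))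
    (hY0 : ∀ n t, t ∈ Ico 0 b → (0:ℝ) ∈ Y n t)
    (hYb : ∀ n, ∀ T ∈ Ico 0 b, ∃ R, ∀ t ∈ Icc 0 T, ∀ y ∈ Y n t, |y| ≤ R)
    (hself : ∀ x : ℕ → ℝ → ℝ, (∀ n, ContinuousOn (x n) (Ico 0 b)) →
      (∀ n, ∀ t ∈ Ico 0 b, x n t ∈ Y n t) → ∀ n, ∀ t ∈ Ico 0 b, topS b t₀ f α x n t ∈ Y n t) :
    ∃ (x : ℕ → ℝ → ℝ) (hc : ∀ n, ContinuousOn (x n) (Set.Ico (0:ℝ) b)),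
      (∀ n : ℕ, ∀ t ∈ Set.Ico (0:ℝ) b,
        HasDerivWithinAt (x n) (f n t (fun m => x m t)) (Set.Ico (0:ℝ) b) t) ∧
      (∀ n : ℕ, x n 0 = α n (ContinuousMap.mk ((Set.Icc (0:ℝ) t₀).restrict (x n))
        (((hc n).mono (fun s hs => ⟨hs.1, lt_of_le_of_lt hs.2 ht₀b⟩)).restrict))) := by
  classical
  have hb : 0 < b := ht₀.trans ht₀b
  -- bounds for f
  have hN : ∀ n, ∀ T : ℝ, ∃ N : ℝ, 0 ≤ N ∧ (T ∈ Ico 0 b → ∀ s ∈ Icc 0 T, ∀ y : ℕ → ℝ,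
      (∀ i, y i ∈ Y i s) → |f n s y| ≤ N) := by
    intro n T
    by_cases hT : T ∈ Ico 0 b
    · choose R hR using fun i => hYb i T hT
      have hcomp : IsCompact (Icc 0 T ×ˢ (Set.pi univ fun i => Icc (-R i) (R i))) :=
        isCompact_Icc.prod (isCompact_univ_pi fun i => isCompact_Icc)
      obtain ⟨C, hC⟩ := hcomp.exists_bound_of_continuousOn ((hf n).mono (fun q hq =>
        ⟨⟨hq.1.1, lt_of_le_of_lt hq.1.2 hT.2⟩, mem_univ _⟩))
      refine ⟨max C 0, le_max_right _ _, fun _ s hs y hy => ?_⟩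
      exact (hC (s, y) ⟨hs, fun i _ => abs_le.1 (hR i s hs _ (hy i))⟩).trans (le_max_left _ _)
    · exact ⟨0, le_rfl, fun h => absurd h hT⟩
  choose N hN0 hN using hN
  let K : Set (ℕ → ℝ → ℝ) := {x | (∀ n t, t ∉ Ico 0 b → x n t = 0) ∧
    (∀ n t, t ∈ Ico 0 b → x n t ∈ Y n t) ∧
    ∀ n T, T ∈ Ico 0 b → ∀ s ∈ Icc 0 T, ∀ t ∈ Icc 0 T, |x n t - x n s| ≤ N n T * |t - s|}
  have hev : ∀ n t, Continuous (fun x : ℕ → ℝ → ℝ => x n t) := fun n t => by fun_prop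
  have hKcl : IsClosed K := by
    refine IsClosed.and ?_ (IsClosed.and ?_ ?_)
    · exact isClosed_all fun n => isClosed_all fun t => isClosed_all fun _ =>
        isClosed_eq (hev n t) continuous_const
    · exact isClosed_all fun n => isClosed_all fun t => isClosed_all fun _ =>
        (hYcl n t).preimage (hev n t)
    · exact isClosed_all fun n => isClosed_all fun T => isClosed_all fun _ => isClosed_all fun s =>
        isClosed_all fun _ => isClosed_all fun t => isClosed_all fun _ =>
        isClosed_le ((hev n t).sub (hev n s)).abs continuous_const
  have hKc : IsCompact K := by
    have : ∀ n t, ∃ R : ℝ, ∀ x ∈ K, x n t ∈ Icc (-R) R := by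
      intro n t
      by_cases ht : t ∈ Ico 0 b
      · obtain ⟨R, hR⟩ := hYb n t ht
        exact ⟨R, fun x hx => abs_le.1 (hR t ⟨ht.1, le_rfl⟩ _ (hx.2.1 n t ht))⟩
      · exact ⟨0, fun x hx => by simp [hx.1 n t ht]⟩
    choose R hR using this
    refine IsCompact.of_isClosed_subset (isCompact_univ_pi fun n => isCompact_univ_pi fun t =>
      (isCompact_Icc (a := -R n t) (b := R n t))) hKcl ?_
    exact fun x hx n _ t _ => hR n t x hx
  have hKconv : Convex ℝ K := by
    intro x hx y hy p q hp hq hpq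
    refine ⟨fun n t ht => ?_, fun n t ht => ?_, fun n T hT s hs t ht => ?_⟩
    · simp [hx.1 n t ht, hy.1 n t ht]
    · exact hYco n t (hx.2.1 n t ht) (hy.2.1 n t ht) hp hq hpq
    · have h1 := hx.2.2 n T hT s hs t ht
      have h2 := hy.2.2 n T hT s hs t ht
      have e : (p • x + q • y) n t - (p • x + q • y) n s =
        p * (x n t - x n s) + q * (y n t - y n s) := by
          simp only [Pi.add_apply, Pi.smul_apply, smul_eq_mul]; ring
      rw [e]
      calc _ ≤ |p * (x n t - x n s)| + |q * (y n t - y n s)| := abs_add_le _ _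
        _ = p * |x n t - x n s| + q * |y n t - y n s| := by
          rw [abs_mul, abs_mul, abs_of_nonneg hp, abs_of_nonneg hq]
        _ ≤ p * (N n T * |t - s|) + q * (N n T * |t - s|) := by gcongr
        _ = _ := by rw [← add_mul, hpq, one_mul]
  have hKne : K.Nonempty := ⟨0, fun _ _ _ => rfl, fun n t ht => hY0 n t ht, fun n T hT s hs t ht => by
    simp; exact mul_nonneg (hN0 n T) (abs_nonneg _)⟩
  -- joint continuity
  have hjoint : ∀ n, ∀ T ∈ Ico 0 b,
      Continuous (fun q : K × ℝ => (q.1 : ℕ → ℝ → ℝ) n (clampS T q.2)) := by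
    intro n T hT
    rw [continuous_iff_continuousAt]
    rintro ⟨x0, s0⟩
    rw [ContinuousAt, tendsto_iff_dist_tendsto_zero]
    let β : K × ℝ → ℝ := fun q => N n T * |clampS T q.2 - clampS T s0| +
      |(q.1 : ℕ → ℝ → ℝ) n (clampS T s0) - (x0 : ℕ → ℝ → ℝ) n (clampS T s0)|
    have hβ : Continuous β := by
      have h1 : Continuous fun q : K × ℝ => clampS T q.2 := (continuous_clampS T).comp continuous_snd
      have h2 : Continuous fun q : K × ℝ => (q.1 : ℕ → ℝ → ℝ) n (clampS T s0) :=
        (hev n _).comp (continuous_subtype_val.comp continuous_fst)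
      exact (continuous_const.mul (h1.sub continuous_const).abs).add (h2.sub continuous_const).abs
    have hβ0 : Filter.Tendsto β (nhds (x0, s0)) (nhds 0) := by
      have := hβ.tendsto (x0, s0)
      simpa [β] using this
    refine squeeze_zero (fun _ => dist_nonneg) (fun q => ?_) hβ0
    have h3 := q.1.2.2.2 n T hT (clampS T s0) (clampS_mem hT.1 _) (clampS T q.2) (clampS_mem hT.1 _)
    rw [Real.dist_eq]
    refine (abs_sub_le _ ((q.1 : ℕ → ℝ → ℝ) n (clampS T s0)) _).trans ?_
    exact add_le_add_left h3 _
  have hxc : ∀ x ∈ K, ∀ n, ContinuousOn (x n) (Ico 0 b) := by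
    intro x hx n t ht
    obtain ⟨T, hT1, hT2⟩ := exists_between ht.2
    have h1 : Continuous (fun s => x n (clampS T s)) :=
      (hjoint n T ⟨ht.1.trans hT1.le, hT2⟩).comp
        ((continuous_const (y := (⟨x, hx⟩ : K))).prodMk continuous_id)
    refine (h1.continuousAt.continuousWithinAt (s := Ico 0 b) (x := t)).congr_of_eventuallyEq ?_ ?_
    · filter_upwards [self_mem_nhdsWithin, mem_nhdsWithin_of_mem_nhds (Iio_mem_nhds hT1)] with s hs hs2
      rw [clampS_eq ⟨hs.1, le_of_lt hs2⟩]
    · rw [clampS_eq ⟨ht.1, hT1.le⟩]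
  have hgc : ∀ x ∈ K, ∀ n, ContinuousOn (gS f x n) (Ico 0 b) := fun x hx n => gS_cont hf (hxc x hx) n
  have hgI : ∀ x ∈ K, ∀ n, ∀ s ∈ Ico 0 b, ∀ t ∈ Ico 0 b,
      IntervalIntegrable (gS f x n) volume s t := by
    intro x hx n s hs t ht
    refine ((hgc x hx n).mono ?_).intervalIntegrable
    exact ordConnected_Ico.uIcc_subset hs ht
  have hsub : Icc 0 t₀ ⊆ Ico 0 b := fun s hs => ⟨hs.1, lt_of_le_of_lt hs.2 ht₀b⟩
  have hIc : ∀ n, ∀ T ∈ Ico 0 b,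
      Continuous (fun q : K × ℝ => ∫ s in (0:ℝ)..q.2, gS f q.1 n (clampS T s)) := by
    intro n T hT
    refine intervalIntegral.continuous_parametric_intervalIntegral_of_continuous
      (f := fun (q : K × ℝ) s => gS f q.1 n (clampS T s)) ?_ continuous_snd
    refine (hf n).comp_continuous (f := fun z : (K × ℝ) × ℝ => (clampS T z.2, fun m => (z.1.1 : ℕ → ℝ → ℝ) m (clampS T z.2))) ?_ ?_
    · refine ((continuous_clampS T).comp continuous_snd).prodMk (continuous_pi fun m => ?_)
      exact (hjoint m T hT).comp ((continuous_fst.comp continuous_fst).prodMk continuous_snd)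
    · intro z
      have := clampS_mem hT.1 z.2
      exact ⟨⟨this.1, lt_of_le_of_lt this.2 hT.2⟩, mem_univ _⟩
  have hIeq : ∀ x : ℕ → ℝ → ℝ, ∀ n, ∀ T : ℝ, ∀ t ∈ Icc 0 T,
      ∫ s in (0:ℝ)..t, gS f x n (clampS T s) = ∫ s in (0:ℝ)..t, gS f x n s := by
    intro x n T t ht
    refine intervalIntegral.integral_congr fun s hs => ?_
    rw [uIcc_of_le ht.1] at hs
    simp only [clampS_eq (show s ∈ Icc 0 T from ⟨hs.1, hs.2.trans ht.2⟩)]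
  have hTc : Continuous (fun x : K => topS b t₀ f α x) := by
    refine continuous_pi fun n => continuous_pi fun t => ?_
    by_cases ht : t ∈ Ico 0 b
    · simp only [topS, if_pos ht]
      refine (continuous_const.mul ((α n).continuous.comp ?_)).add ?_
      · refine ContinuousMap.continuous_of_continuous_uncurry _ ?_
        have h1 := (hIc n t₀ ⟨ht₀.le, ht₀b⟩).comp
          (continuous_fst.prodMk (continuous_subtype_val.comp continuous_snd) :
            Continuous fun z : K × Icc (0:ℝ) t₀ => (z.1, (z.2 : ℝ)))
        refine h1.congr fun z => ?_
        simp only [Function.comp, Function.uncurry]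
        rw [hIeq _ _ _ _ z.2.2, primC_apply ((hgc _ z.1.2 n).mono hsub)]
      · have h1 := (hIc n t ht).comp (continuous_id.prodMk continuous_const :
            Continuous fun z : K => (z, t))
        refine h1.congr fun z => ?_
        simp only [Function.comp, id]
        rw [hIeq _ _ _ _ ⟨ht.1, le_rfl⟩]
    · simp only [topS, if_neg ht]; exact continuous_const
  have hTm : ∀ x : K, topS b t₀ f α x ∈ K := by
    rintro ⟨x, hx⟩
    refine ⟨fun n t ht => by simp only [topS, if_neg ht],
      fun n t ht => hself x (hxc x hx) (fun n t ht => hx.2.1 n t ht) n t ht, ?_⟩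
    intro n T hT s hs t ht
    have hs' : s ∈ Ico 0 b := ⟨hs.1, lt_of_le_of_lt hs.2 hT.2⟩
    have ht' : t ∈ Ico 0 b := ⟨ht.1, lt_of_le_of_lt ht.2 hT.2⟩
    have h0 : (0:ℝ) ∈ Ico 0 b := ⟨le_rfl, hb⟩
    simp only [topS, if_pos hs', if_pos ht']
    rw [add_sub_add_left_eq_sub, intervalIntegral.integral_interval_sub_left
      (hgI x hx n _ h0 _ ht') (hgI x hx n _ h0 _ hs')]
    rw [← Real.norm_eq_abs]
    refine intervalIntegral.norm_integral_le_of_norm_le_const fun r hr => ?_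
    have hr' : r ∈ Icc 0 T := (ordConnected_Icc.uIcc_subset hs ht) (uIoc_subset_uIcc hr)
    exact hN n T hT r hr' _ (fun i => hx.2.1 i r ⟨hr'.1, lt_of_le_of_lt hr'.2 hT.2⟩)
  obtain ⟨⟨x, hx⟩, hfix⟩ := tychonoff_fixed K hKc hKconv hKne _ hTc hTm
  simp only at hfix
  have hxeq : ∀ n, ∀ t ∈ Ico 0 b, x n t =
      (1 - α n 1)⁻¹ * α n (primC t₀ (gS f x n)) + ∫ s in (0:ℝ)..t, gS f x n s := by
    intro n t ht
    have := congrFun (congrFun hfix n) t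
    simp only [topS, if_pos ht] at this
    exact this.symm
  refine ⟨x, hxc x hx, ?_, ?_⟩
  · intro n t ht
    obtain ⟨T, hT1, hT2⟩ := exists_between ht.2
    have hT : T ∈ Ico 0 b := ⟨ht.1.trans hT1.le, hT2⟩
    have hcont : Continuous (fun s => gS f x n (clampS T s)) :=
      (hgc x hx n).comp_continuous (continuous_clampS T) (fun s => by
        have := clampS_mem hT.1 s
        exact ⟨this.1, lt_of_le_of_lt this.2 hT.2⟩)
    have hd := ((hcont.integral_hasStrictDerivAt 0 t).hasDerivAt.const_add
      ((1 - α n 1)⁻¹ * α n (primC t₀ (gS f x n)))).hasDerivWithinAt (s := Ico 0 b)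
    rw [clampS_eq (show t ∈ Icc 0 T from ⟨ht.1, hT1.le⟩)] at hd
    refine hd.congr_of_eventuallyEq ?_ ?_
    · filter_upwards [self_mem_nhdsWithin, mem_nhdsWithin_of_mem_nhds (Iio_mem_nhds hT1)] with s hs hs2
      rw [hxeq n s hs, hIeq _ _ _ _ ⟨hs.1, le_of_lt hs2⟩]
    · rw [hxeq n t ht, hIeq _ _ _ _ ⟨ht.1, hT1.le⟩]
  · intro n
    set c := (1 - α n 1)⁻¹ * α n (primC t₀ (gS f x n)) with hc
    have hx0 : x n 0 = c := by
      rw [hxeq n 0 ⟨le_rfl, hb⟩]; simp [hc]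
    have hne : 1 - α n 1 ≠ 0 := sub_ne_zero.2 (hα n).symm
    have hP : α n (primC t₀ (gS f x n)) = (1 - α n 1) * c := by
      rw [hc, mul_inv_cancel_left₀ hne]
    rw [hx0]
    have : ∀ w : C(Set.Icc (0:ℝ) t₀, ℝ), (∀ t : Icc (0:ℝ) t₀, w t = x n t) → c = α n w := by
      intro w hw
      have e : w = c • (1 : C(Set.Icc (0:ℝ) t₀, ℝ)) + primC t₀ (gS f x n) := by
        ext t
        rw [hw, hxeq n t (hsub t.2)]
        simp [primC_apply ((hgc x hx n).mono hsub), hc]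
      rw [e, map_add, map_smul, hP, smul_eq_mul]; ring
    exact this _ (fun t => rfl)

end Brouwer

lemma le_semS {N : ℕ} (x : ℕ → ℝ) {i : ℕ} (hi : i < N) : |x i| ≤ semS N x :=
  le_ciSup (f := fun i : Fin N => |x (i : ℕ)|) (Set.finite_range _).bddAbove ⟨i, hi⟩

lemma semS_nonneg (N : ℕ) (x : ℕ → ℝ) : 0 ≤ semS N x := Real.iSup_nonneg fun _ => abs_nonneg _

lemma semS_le {N : ℕ} {x : ℕ → ℝ} {M : ℝ} (hM : 0 ≤ M) (h : ∀ i, i < N → |x i| ≤ M) :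
    semS N x ≤ M := Real.iSup_le (fun i => h i i.2) hM

/-- The a priori bound on the primitive of the nonlinearity on the initial interval. -/
lemma int_bound1 {t₀ : ℝ} (g A : ℝ → ℝ) (R B : ℝ) (hR : 0 ≤ R) (hB : 0 ≤ B)
    (hA0 : ∀ t ∈ Icc (0:ℝ) t₀, 0 ≤ A t) (hA : IntervalIntegrable A volume 0 t₀)
    (hg : ∀ s ∈ Icc 0 t₀, |g s| ≤ A s * R + B) (t : ℝ) (ht : t ∈ Icc 0 t₀) :
    |∫ s in (0:ℝ)..t, g s| ≤ (∫ s in (0:ℝ)..t₀, A s) * R + B * t₀ := by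
  have h0 : (0:ℝ) ≤ t₀ := ht.1.trans ht.2
  have hi : IntervalIntegrable (fun s => A s * R + B) volume 0 t₀ :=
    (hA.mul_const R).add intervalIntegrable_const
  have hi' : IntervalIntegrable (fun s => A s * R + B) volume 0 t := by
    refine hi.mono_set ?_
    rw [uIcc_of_le ht.1, uIcc_of_le h0]
    exact Icc_subset_Icc_right ht.2
  have h1 : |∫ s in (0:ℝ)..t, g s| ≤ ∫ s in (0:ℝ)..t, (A s * R + B) := by
    rw [← Real.norm_eq_abs]
    refine intervalIntegral.norm_integral_le_of_norm_le ht.1 ?_ hi'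
    refine Filter.Eventually.of_forall fun s hs => ?_
    exact hg s ⟨hs.1.le, hs.2.trans ht.2⟩
  have h2 : ∫ s in (0:ℝ)..t, (A s * R + B) ≤ ∫ s in (0:ℝ)..t₀, (A s * R + B) := by
    refine intervalIntegral.integral_mono_interval le_rfl ht.1 ht.2 ?_ hi
    refine (ae_restrict_iff' measurableSet_Ioc).2 (Filter.Eventually.of_forall fun s hs => ?_)
    have := mul_nonneg (hA0 s ⟨hs.1.le, hs.2⟩) hR
    simp only [Pi.zero_apply]
    linarith
  have h3 : ∫ s in (0:ℝ)..t₀, (A s * R + B) = (∫ s in (0:ℝ)..t₀, A s) * R + B * t₀ := by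
    rw [intervalIntegral.integral_add (hA.mul_const R) intervalIntegrable_const,
      intervalIntegral.integral_mul_const, intervalIntegral.integral_const]
    simp [mul_comm]
  linarith

/-- The exponential bound on the primitive of the nonlinearity on the second interval. -/
lemma int_bound2 {t₀ t : ℝ} (ht : t₀ ≤ t) (g : ℝ → ℝ) (R C : ℝ)
    (hg : ∀ s ∈ Icc t₀ t, |g s| ≤ C * ((R + 1) * Real.exp (C * (s - t₀)))) :
    |∫ s in t₀..t, g s| ≤ (R + 1) * Real.exp (C * (t - t₀)) - (R + 1) := by
  have hc : Continuous fun s : ℝ => C * ((R + 1) * Real.exp (C * (s - t₀))) := by fun_prop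
  have h1 : |∫ s in t₀..t, g s| ≤ ∫ s in t₀..t, C * ((R + 1) * Real.exp (C * (s - t₀))) := by
    rw [← Real.norm_eq_abs]
    refine intervalIntegral.norm_integral_le_of_norm_le ht ?_ (hc.intervalIntegrable _ _)
    exact Filter.Eventually.of_forall fun s hs => hg s ⟨hs.1.le, hs.2⟩
  have h2 : ∫ s in t₀..t, C * ((R + 1) * Real.exp (C * (s - t₀)))
      = (R + 1) * Real.exp (C * (t - t₀)) - (R + 1) * Real.exp (C * (t₀ - t₀)) := by
    refine intervalIntegral.integral_eq_sub_of_hasDerivAt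
      (f := fun s => (R + 1) * Real.exp (C * (s - t₀))) ?_ (hc.intervalIntegrable _ _)
    intro s _
    have h3 := ((((hasDerivAt_id s).sub_const t₀).const_mul C).exp).const_mul (R + 1)
    have h4 : (R + 1) * (Real.exp (C * (s - t₀)) * (C * 1)) =
        C * ((R + 1) * Real.exp (C * (s - t₀))) := by ring
    rw [← h4]
    exact h3
  rw [sub_self, mul_zero, Real.exp_zero, mul_one] at h2
  linarith


theorem statement_12
    (b : ℝ) (hb : 0 < b)
    (t₀ : ℝ) (ht₀ : 0 < t₀) (ht₀b : t₀ < b)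
    (f : ℕ → ℝ → (ℕ → ℝ) → ℝ)
    (hf : ∀ n, ContinuousOn (fun q : ℝ × (ℕ → ℝ) => f n q.1 q.2)
      (Set.Ico (0:ℝ) b ×ˢ (Set.univ : Set (ℕ → ℝ))))
    (α : ℕ → C(Set.Icc (0:ℝ) t₀, ℝ) →L[ℝ] ℝ)
    (hα : ∀ n, α n 1 ≠ 1)
    (np : ℕ → ℕ) (hnp : StrictMono np) (hnp0 : ∀ p, 0 < np p)
    (ts : ℕ → ℝ) (hts : StrictMono ts) (hts0 : t₀ < ts 0)
    (htsb : Filter.Tendsto ts Filter.atTop (nhds b))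
    (A : ℕ → ℝ → ℝ) (B C : ℕ → ℝ)
    (hA_nonneg : ∀ p, ∀ t ∈ Set.Icc (0:ℝ) t₀, 0 ≤ A p t)
    (hA_int : ∀ p, IntervalIntegrable (A p) MeasureTheory.volume 0 t₀)
    (hB : ∀ p, 0 ≤ B p) (hC : ∀ p, 0 ≤ C p)
    (hgrowth1 : ∀ p, ∀ t ∈ Set.Icc (0:ℝ) t₀, ∀ x : ℕ → ℝ,
      semS (np p) (fun i => f i t x) ≤ A p t * semS (np p) x + B p)
    (hgrowth2 : ∀ p, ∀ t ∈ Set.Icc t₀ (ts p), ∀ x : ℕ → ℝ,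
      semS (np p) (fun i => f i t x) ≤ C p * (semS (np p) x + 1))
    (hsmall : ∀ p,
      (semS (np p) (fun i => (1 - α i 1)⁻¹) * semS (np p) (fun i => ‖α i‖) + 1) *
        (∫ t in (0:ℝ)..t₀, A p t) < 1) :
    ∃ (x : ℕ → ℝ → ℝ) (hc : ∀ n, ContinuousOn (x n) (Set.Ico (0:ℝ) b)),
      (∀ n : ℕ, ∀ t ∈ Set.Ico (0:ℝ) b,
        HasDerivWithinAt (x n) (f n t (fun m => x m t)) (Set.Ico (0:ℝ) b) t) ∧
      (∀ n : ℕ, x n 0 = α n (ContinuousMap.mk ((Set.Icc (0:ℝ) t₀).restrict (x n))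
        (((hc n).mono (fun s hs => ⟨hs.1, lt_of_le_of_lt hs.2 ht₀b⟩)).restrict))) := by
  classical
  set a : ℕ → ℝ := fun p => ∫ t in (0:ℝ)..t₀, A p t with ha
  set S : ℕ → ℝ := fun p => semS (np p) (fun i => (1 - α i 1)⁻¹) * semS (np p) (fun i => ‖α i‖)
    with hS
  have hS0 : ∀ p, 0 ≤ S p := fun p => mul_nonneg (semS_nonneg _ _) (semS_nonneg _ _)
  have ha0 : ∀ p, 0 ≤ a p := fun p =>
    intervalIntegral.integral_nonneg ht₀.le (fun t ht => hA_nonneg p t ht)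
  have hsm : ∀ p, (S p + 1) * a p < 1 := hsmall
  have hRex : ∀ p, ∃ R, 0 ≤ R ∧ (S p + 1) * (a p * R + B p * t₀) = R := by
    intro p
    have hd : 0 < 1 - (S p + 1) * a p := by linarith [hsm p]
    refine ⟨(S p + 1) * (B p * t₀) / (1 - (S p + 1) * a p), ?_, ?_⟩
    · exact div_nonneg (mul_nonneg (by linarith [hS0 p]) (mul_nonneg (hB p) ht₀.le)) hd.le
    · field_simp
      ring
  choose R hR0 hReq using hRex
  have htsp : ∀ p, t₀ < ts p := fun p => hts0.trans_le (hts.monotone (Nat.zero_le p))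
  let M : ℕ → ℝ → ℝ := fun p t => (R p + 1) * Real.exp (C p * max (t - t₀) 0) - 1
  have hMmono : ∀ p, Monotone (M p) := by
    intro p s t hst
    have h1 : C p * max (s - t₀) 0 ≤ C p * max (t - t₀) 0 :=
      mul_le_mul_of_nonneg_left (max_le_max (by linarith) le_rfl) (hC p)
    have h2 := mul_le_mul_of_nonneg_left (Real.exp_le_exp.2 h1)
      (by linarith [hR0 p] : 0 ≤ R p + 1)
    simp only [M]
    linarith
  have hM1 : ∀ p t, t ≤ t₀ → M p t = R p := by
    intro p t ht
    simp [M, max_eq_right (sub_nonpos.2 ht)]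
  have hM2 : ∀ p t, t₀ ≤ t → M p t = (R p + 1) * Real.exp (C p * (t - t₀)) - 1 := by
    intro p t ht
    simp [M, max_eq_left (sub_nonneg.2 ht)]
  have hM0 : ∀ p t, 0 ≤ M p t := by
    intro p t
    rcases le_total t t₀ with h | h
    · rw [hM1 p t h]; exact hR0 p
    · have := hMmono p h
      rw [hM1 p t₀ le_rfl] at this
      exact (hR0 p).trans this
  refine exists_solution b t₀ ht₀ ht₀b f hf α hα
    (fun n t => {y | ∀ p, n < np p → t ≤ ts p → |y| ≤ M p t}) ?_ ?_ ?_ ?_ ?_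
  · intro n t
    exact isClosed_all fun p => isClosed_all fun _ => isClosed_all fun _ =>
      isClosed_le continuous_abs continuous_const
  · intro n t y hy z hz c d hc hd hcd p h1 h2
    have e1 := hy p h1 h2
    have e2 := hz p h1 h2
    simp only [smul_eq_mul]
    calc |c * y + d * z| ≤ |c * y| + |d * z| := abs_add_le _ _
      _ = c * |y| + d * |z| := by rw [abs_mul, abs_mul, abs_of_nonneg hc, abs_of_nonneg hd]
      _ ≤ c * M p t + d * M p t := by gcongr
      _ = M p t := by rw [← add_mul, hcd, one_mul]
  · intro n t _ p _ _
    simpa using hM0 p t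
  · intro n T hT
    have hev := (htsb.eventually (lt_mem_nhds hT.2)).and (Filter.eventually_ge_atTop (n + 1))
    obtain ⟨p, hp1, hp2⟩ := hev.exists
    refine ⟨M p T, fun t ht y hy => (hy p ?_ (ht.2.trans hp1.le)).trans (hMmono p ht.2)⟩
    have := hnp.le_apply (x := p)
    omega
  · intro x hx hxY n t ht p hn htp
    have hxs : ∀ s ∈ Ico 0 b, s ≤ ts p → semS (np p) (fun m => x m s) ≤ M p s :=
      fun s hs hsp => semS_le (hM0 p s) fun i hi => hxY i s hs p hi hsp
    have hg1 : ∀ s ∈ Icc 0 t₀, |gS f x n s| ≤ A p s * R p + B p := by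
      intro s hs
      have h1 := hxs s ⟨hs.1, hs.2.trans_lt ht₀b⟩ (hs.2.trans (htsp p).le)
      rw [hM1 p s hs.2] at h1
      have h2 := le_semS (fun i => f i s (fun m => x m s)) hn
      have h3 := hgrowth1 p s hs (fun m => x m s)
      have h4 := mul_le_mul_of_nonneg_left h1 (hA_nonneg p s hs)
      simp only [gS]
      linarith
    have hQ := int_bound1 (gS f x n) (A p) (R p) (B p) (hR0 p) (hB p) (hA_nonneg p) (hA_int p) hg1
    have hgc := gS_cont hf hx n
    have hQ0 : 0 ≤ a p * R p + B p * t₀ :=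
      add_nonneg (mul_nonneg (ha0 p) (hR0 p)) (mul_nonneg (hB p) ht₀.le)
    have hnorm : ‖primC t₀ (gS f x n)‖ ≤ a p * R p + B p * t₀ := by
      rw [ContinuousMap.norm_le _ hQ0]
      intro s
      rw [primC_apply (hgc.mono fun s hs => ⟨hs.1, hs.2.trans_lt ht₀b⟩)]
      exact hQ s s.2
    have hc : |(1 - α n 1)⁻¹ * α n (primC t₀ (gS f x n))| ≤ S p * (a p * R p + B p * t₀) := by
      rw [abs_mul]
      have e1 := le_semS (fun i => (1 - α i 1)⁻¹) hn
      have e2 := (le_abs_self _).trans (le_semS (fun i => ‖α i‖) hn)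
      have e3 : |α n (primC t₀ (gS f x n))| ≤
          semS (np p) (fun i => ‖α i‖) * (a p * R p + B p * t₀) := by
        rw [← Real.norm_eq_abs]
        exact ((α n).le_opNorm _).trans
          (mul_le_mul e2 hnorm (norm_nonneg _) (semS_nonneg _ _))
      simp only [hS]
      rw [mul_assoc]
      exact mul_le_mul e1 e3 (abs_nonneg _) (semS_nonneg _ _)
    have hRp := hReq p
    simp only [topS, if_pos ht]
    refine (abs_add_le _ _).trans ?_
    rcases le_total t t₀ with h | h
    · rw [hM1 p t h]
      have := hQ t ⟨ht.1, h⟩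
      linarith
    · have hIntg : ∀ u v, u ∈ Icc 0 t → v ∈ Icc 0 t →
          IntervalIntegrable (gS f x n) volume u v := by
        intro u v hu hv
        refine (hgc.mono ?_).intervalIntegrable
        refine (Set.uIcc_subset_Icc hu hv).trans ?_
        exact fun s hs => ⟨hs.1, hs.2.trans_lt ht.2⟩
      have hsplit := intervalIntegral.integral_add_adjacent_intervals
        (hIntg 0 t₀ ⟨le_rfl, ht.1⟩ ⟨ht₀.le, h⟩) (hIntg t₀ t ⟨ht₀.le, h⟩ ⟨ht.1, le_rfl⟩)
      have hg2 : ∀ s ∈ Icc t₀ t,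
          |gS f x n s| ≤ C p * ((R p + 1) * Real.exp (C p * (s - t₀))) := by
        intro s hs
        have h1 := hxs s ⟨ht₀.le.trans hs.1, hs.2.trans_lt ht.2⟩ (hs.2.trans htp)
        rw [hM2 p s hs.1] at h1
        have h2 := le_semS (fun i => f i s (fun m => x m s)) hn
        have h3 := hgrowth2 p s ⟨hs.1, hs.2.trans htp⟩ (fun m => x m s)
        have h4 : C p * (semS (np p) (fun m => x m s) + 1) ≤
            C p * ((R p + 1) * Real.exp (C p * (s - t₀))) :=
          mul_le_mul_of_nonneg_left (by linarith) (hC p)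
        simp only [gS]
        linarith
      have hb2 := int_bound2 h (gS f x n) (R p) (C p) hg2
      have hb1 := hQ t₀ ⟨ht₀.le, le_rfl⟩
      rw [← hsplit, hM2 p t h]
      have htri := abs_add_le (∫ s in (0:ℝ)..t₀, gS f x n s) (∫ s in t₀..t, gS f x n s)
      linarith
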